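/- arXiv:1207.4642 — 3 statements merged into one kernel-verified Lean document; each statement's English description precedes it below -/
import Mathlib

section
/- Let u ∈ PC[0,1] and let (u_k) be a sequence of piecewise constant functions on [0,1] converging to u in L¹[0,1]. Then there exists k_0 such that J(u_k) ≥ J(u) for all k ≥ k_0; in particular liminf_{k→∞} J(u_k) ≥ J(u). -/
open MeasureTheory Filter Set
open scoped ENNReal Classical

noncomputable section

/-- The Lebesgue measure restricted to `[0,1]`. -/
def mu01 : Measure ℝ := volume.restrict (Set.Icc (0:ℝ) 1)

/-- The step function determined by partition points `x` and values `a`. -/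
def stepF {m : ℕ} (x : Fin (m + 1) → ℝ) (a : Fin m → ℝ) : ℝ → ℝ := fun t =>
  ∑ l : Fin m, Set.indicator (Set.Ioo (x l.castSucc) (x l.succ)) (fun _ => a l) t

/-- `u` is a.e. on `[0,1]` represented by the step function with partition `x` and values `a`. -/
def IsPCRep (u : ℝ → ℝ) {m : ℕ} (x : Fin (m + 1) → ℝ) (a : Fin m → ℝ) : Prop :=
  StrictMono x ∧ x 0 = 0 ∧ x (Fin.last m) = 1 ∧ ∀ᵐ t ∂mu01, u t = stepF x a t

/-- `u` is piecewise constant on `[0,1]` (up to a.e. equality). -/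
def IsPC (u : ℝ → ℝ) : Prop :=
  ∃ (m : ℕ) (x : Fin (m + 1) → ℝ) (a : Fin m → ℝ), IsPCRep u x a

/-- The number of jumps `J(u)`: the minimal number of interior partition points over all
piecewise constant representations of `u`. -/
def jumps (u : ℝ → ℝ) : ℕ :=
  sInf {jj : ℕ | ∃ (x : Fin (jj + 2) → ℝ) (a : Fin (jj + 1) → ℝ), IsPCRep u x a}

/-- `u` is piecewise constant with all jump locations inside `S`. -/
def IsPCIn (u : ℝ → ℝ) (S : Set ℝ) : Prop :=
  ∃ (m : ℕ) (x : Fin (m + 1) → ℝ) (a : Fin m → ℝ), IsPCRep u x a ∧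
    ∀ i : Fin (m + 1), i ≠ 0 → i ≠ Fin.last m → x i ∈ S

/-- The `L¹[0,1]` distance of two functions. -/
def L1dist (u v : ℝ → ℝ) : ℝ := ∫ t, |u t - v t| ∂mu01

/-- The continuous `L¹`-Potts functional `P_γ` with data `f`. -/
def Potts (γ : ℝ) (f u : ℝ → ℝ) : ℝ≥0∞ :=
  if IsPC u then ENNReal.ofReal (γ * (jumps u : ℝ) + L1dist u f) else ⊤

/-- The (semi-)discrete `L¹`-Potts functional with data `f`, restricted to piecewise
constant functions whose jumps lie in `S`. -/
def PottsIn (γ : ℝ) (f : ℝ → ℝ) (S : Set ℝ) (u : ℝ → ℝ) : ℝ≥0∞ :=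
  if IsPCIn u S then ENNReal.ofReal (γ * (jumps u : ℝ) + L1dist u f) else ⊤

/-!
Take a representation of `u` with the fewest jumps: neighbouring values differ, since otherwise two
cells could be merged. The midpoints of its cells bound pairwise disjoint intervals, one around each
jump of `u`. A function that is constant on such an interval has `L¹` distance to `u` at least half
the jump height times the distance from the jump to the nearer endpoint. Hence a piecewise constant
function closer to `u` than all these bounds has a jump in every interval.
-/

theorem ae_restrict_Ioo_of_Ioo_of_Ioo {α : Type*} [LinearOrder α] [MeasurableSpace α]
    {μ : Measure α} [NullSingletonClass μ] {p : α → Prop} {r s t : α} (hrs : r < s) (hst : s ≤ t)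
    (hleft : ∀ᵐ z ∂μ.restrict (Ioo r s), p z) (hright : ∀ᵐ z ∂μ.restrict (Ioo s t), p z) :
    ∀ᵐ z ∂μ.restrict (Ioo r t), p z := by
  rw [← Ioo_union_Ico_eq_Ioo hrs hst, ae_restrict_union_iff]
  exact ⟨hleft, Measure.restrict_congr_set (μ := μ) Ioo_ae_eq_Ico ▸ hright⟩

section OpenCell

variable {α : Type*}

/-- The `l`-th open cell `(x_l, x_{l+1})` of a partition; monotonicity of `x` is not built in. -/
def openCell [Preorder α] {m : ℕ} (x : Fin (m + 1) → α) (l : Fin m) : Set α :=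
  Ioo (x l.castSucc) (x l.succ)

theorem pairwise_disjoint_openCell [Preorder α] {m : ℕ} {x : Fin (m + 1) → α} (hx : Monotone x) :
    Pairwise (Function.onFun Disjoint (openCell x)) := by
  refine (pairwise_disjoint_on _).2 fun k l hkl => disjoint_left.2 fun t htk htl => ?_
  exact (htk.2.trans_le (hx (Fin.succ_le_castSucc_iff.2 hkl))).not_gt htl.1

theorem openCell_subset_Icc [Preorder α] {m : ℕ} {x : Fin (m + 1) → α} (hx : Monotone x)
    (l : Fin m) : openCell x l ⊆ Icc (x 0) (x (Fin.last m)) :=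
  Ioo_subset_Icc_self.trans (Icc_subset_Icc (hx (Fin.zero_le _)) (hx (Fin.le_last _)))

theorem exists_mem_openCell [LinearOrder α] {m : ℕ} {x : Fin (m + 1) → α} {t : α}
    (ht : t ∈ Icc (x 0) (x (Fin.last m))) (hrange : t ∉ range x) : ∃ l, t ∈ openCell x l := by
  by_contra! hcell
  have hlt : ∀ i, x i < t := by
    intro i
    induction i using Fin.induction with
    | zero => exact ht.1.lt_of_ne fun h => hrange ⟨_, h⟩
    | succ i ih =>
      refine lt_of_le_of_ne ?_ fun h => hrange ⟨_, h⟩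
      exact not_lt.1 fun h => hcell i ⟨ih, h⟩
  exact (hlt _).not_ge ht.2

theorem exists_Ioo_subset_openCell [LinearOrder α] {m : ℕ} {x : Fin (m + 2) → α} {p q : α}
    (hpq : (Ioo p q).Nonempty) (hp : x 0 ≤ p) (hq : q ≤ x (Fin.last (m + 1)))
    (hx : ∀ j : Fin m, x j.castSucc.succ ∉ Ioo p q) : ∃ l, Ioo p q ⊆ openCell x l := by
  have hx' : ∀ i, x i ∉ Ioo p q := by
    intro i
    induction i using Fin.cases with
    | zero => exact fun h => h.1.not_ge hp
    | succ i =>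
      induction i using Fin.lastCases with
      | last => exact fun h => h.2.not_ge hq
      | cast j => exact hx j
  obtain ⟨t, ht⟩ := hpq
  obtain ⟨l, hl⟩ := exists_mem_openCell ⟨hp.trans ht.1.le, ht.2.le.trans hq⟩
    (by rintro ⟨i, rfl⟩; exact hx' i ht)
  refine ⟨l, Ioo_subset_Ioo ?_ ?_⟩
  · exact not_lt.1 fun h => hx' _ ⟨h, hl.1.trans ht.2⟩
  · exact not_lt.1 fun h => hx' _ ⟨ht.1.trans hl.2, h⟩

theorem le_of_forall_exists_mem_openCell [Preorder α] {m n : ℕ} {x : Fin (m + 1) → α}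
    (hx : Monotone x) {y : Fin n → α} (h : ∀ l, ∃ j, y j ∈ openCell x l) : m ≤ n := by
  choose f hf using h
  have hinj : Function.Injective f := fun k l hkl =>
    (pairwise_disjoint_openCell hx).eq (not_disjoint_iff.2 ⟨_, hf k, hkl ▸ hf l⟩)
  simpa using Fintype.card_le_of_injective f hinj

-- The point removed here, `x i.succ.castSucc`, separates the cells `i.castSucc` and `i.succ`.
theorem openCell_comp_succAbove_self [Preorder α] {n : ℕ} (x : Fin (n + 3) → α)
    (i : Fin (n + 1)) :
    openCell (x ∘ i.succ.castSucc.succAbove) i = Ioo (x i.castSucc.castSucc) (x i.succ.succ) := by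
  simp only [openCell, Function.comp_apply, Fin.succAbove_succ_self, Fin.succAbove_castSucc_self,
    ← Fin.succ_castSucc, Fin.succ_succAbove_succ]

theorem openCell_comp_succAbove_of_ne [Preorder α] {n : ℕ} (x : Fin (n + 3) → α)
    {i l : Fin (n + 1)} (hl : l ≠ i) :
    openCell (x ∘ i.succ.castSucc.succAbove) l = openCell x (i.succ.succAbove l) := by
  have hsucc : i.succ.castSucc.succAbove l.succ = (i.succ.succAbove l).succ := by
    rw [← Fin.succ_castSucc, Fin.succ_succAbove_succ]
    rcases hl.lt_or_gt with h | h
    · rw [Fin.succAbove_castSucc_of_lt _ _ h, Fin.succAbove_succ_of_le _ _ h.le]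
    · rw [Fin.succAbove_castSucc_of_le _ _ h.le, Fin.succAbove_succ_of_lt _ _ h]
  simp only [openCell, Function.comp_apply, Fin.castSucc_succAbove_castSucc, hsucc]

theorem iUnion_openCell_ae_eq [LinearOrder α] [MeasurableSpace α] {μ : Measure α}
    [NullSingletonClass μ] {m : ℕ} {x : Fin (m + 1) → α} (hx : Monotone x) :
    ⋃ l, openCell x l =ᵐ[μ] Icc (x 0) (x (Fin.last m)) := by
  refine eventuallyEq_set.2 ?_
  filter_upwards [(finite_range x).countable.ae_notMem μ] with t ht
  exact ⟨fun h => iUnion_subset (openCell_subset_Icc hx) h,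
    fun h => mem_iUnion.2 (exists_mem_openCell h ht)⟩

end OpenCell

section CellMidpoint

variable {𝕜 : Type*} [Field 𝕜] [LinearOrder 𝕜] [IsStrictOrderedRing 𝕜]

/-- The midpoint of the `l`-th cell of a partition. The cells of the sequence of midpoints are
used as pairwise disjoint neighbourhoods of the interior partition points. -/
def cellMidpoint {m : ℕ} (x : Fin (m + 1) → 𝕜) (l : Fin m) : 𝕜 :=
  (x l.castSucc + x l.succ) / 2

theorem cellMidpoint_mem_openCell {m : ℕ} {x : Fin (m + 1) → 𝕜} (hx : StrictMono x) (l : Fin m) :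
    cellMidpoint x l ∈ openCell x l :=
  have h : x l.castSucc < x l.succ := hx Fin.castSucc_lt_succ
  ⟨left_lt_add_div_two.2 h, add_div_two_lt_right.2 h⟩

theorem monotone_cellMidpoint {m : ℕ} {x : Fin (m + 1) → 𝕜} (hx : Monotone x) :
    Monotone (cellMidpoint x) := fun k l hkl => by
  have hcastSucc := hx (Fin.castSucc_le_castSucc_iff.2 hkl)
  have hsucc := hx (Fin.succ_le_succ_iff.2 hkl)
  unfold cellMidpoint
  gcongr

end CellMidpoint

theorem stepF_apply {m : ℕ} {x : Fin (m + 1) → ℝ} (hx : Monotone x) (a : Fin m → ℝ) {l : Fin m}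
    {t : ℝ} (ht : t ∈ openCell x l) : stepF x a t = a l := by
  have hother : ∀ k ≠ l, (openCell x k).indicator (fun _ => a k) t = 0 := fun k hkl =>
    indicator_of_notMem (disjoint_right.1 (pairwise_disjoint_openCell hx hkl) ht) _
  exact (Fintype.sum_eq_single l hother).trans (indicator_of_mem ht _)

theorem integrable_stepF {m : ℕ} (x : Fin (m + 1) → ℝ) (a : Fin m → ℝ) (μ : Measure ℝ)
    [IsFiniteMeasure μ] : Integrable (stepF x a) μ :=
  integrable_finsetSum _ fun _ _ => (integrable_const _).indicator measurableSet_Ioo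

theorem isPCRep_iff_forall_openCell {u : ℝ → ℝ} {m : ℕ} {x : Fin (m + 1) → ℝ} {a : Fin m → ℝ} :
    IsPCRep u x a ↔ StrictMono x ∧ x 0 = 0 ∧ x (Fin.last m) = 1 ∧
      ∀ l, u =ᵐ[volume.restrict (openCell x l)] fun _ => a l := by
  refine and_congr_right fun hx => and_congr_right fun h0 => and_congr_right fun h1 => ?_
  have hmu : mu01 = volume.restrict (⋃ l, openCell x l) := by
    rw [Measure.restrict_congr_set (iUnion_openCell_ae_eq hx.monotone), h0, h1, mu01]
  rw [hmu, ae_restrict_iUnion_iff]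
  refine forall_congr' fun l => eventually_congr ?_
  filter_upwards [ae_restrict_mem (measurableSet_Ioo : MeasurableSet (openCell x l))] with t ht
  rw [stepF_apply hx.monotone a ht]

theorem IsPCRep.comp_succAbove {u : ℝ → ℝ} {n : ℕ} {x : Fin (n + 3) → ℝ} {a : Fin (n + 2) → ℝ}
    (h : IsPCRep u x a) {i : Fin (n + 1)} (hi : a i.castSucc = a i.succ) :
    IsPCRep u (x ∘ i.succ.castSucc.succAbove) (a ∘ i.succ.succAbove) := by
  rw [isPCRep_iff_forall_openCell] at h ⊢
  obtain ⟨hx, h0, h1, hu⟩ := h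
  have hlt : ∀ k : Fin (n + 2), x k.castSucc < x k.succ := fun _ => hx Fin.castSucc_lt_succ
  have hne_zero : i.succ.castSucc ≠ 0 := Fin.castSucc_ne_zero_iff.2 i.succ_ne_zero
  refine ⟨hx.comp (Fin.strictMono_succAbove _), ?_, ?_, fun l => ?_⟩
  · rw [Function.comp_apply, Fin.succAbove_ne_zero_zero hne_zero, h0]
  · rw [Function.comp_apply, Fin.succAbove_ne_last_last i.succ.castSucc_ne_last, h1]
  · rcases eq_or_ne l i with rfl | hl
    · rw [openCell_comp_succAbove_self, Function.comp_apply, Fin.succAbove_succ_self]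
      exact ae_restrict_Ioo_of_Ioo_of_Ioo (hlt l.castSucc) (hlt l.succ).le (hu l.castSucc)
        (hi ▸ hu l.succ)
    · rw [openCell_comp_succAbove_of_ne x hl]
      exact hu _

theorem IsPCRep.jumps_le {u : ℝ → ℝ} {n : ℕ} {x : Fin (n + 2) → ℝ} {a : Fin (n + 1) → ℝ}
    (h : IsPCRep u x a) : jumps u ≤ n :=
  Nat.sInf_le ⟨x, a, h⟩

theorem IsPC.exists_isPCRep_jumps {u : ℝ → ℝ} (hu : IsPC u) :
    ∃ (x : Fin (jumps u + 2) → ℝ) (a : Fin (jumps u + 1) → ℝ), IsPCRep u x a := by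
  obtain ⟨m, x, a, h⟩ := hu
  cases m with
  | zero => exact absurd (h.2.1.symm.trans h.2.2.1) zero_ne_one
  | succ n =>
    have hne : {n | ∃ (x : Fin (n + 2) → ℝ) (a : Fin (n + 1) → ℝ), IsPCRep u x a}.Nonempty :=
      ⟨n, x, a, h⟩
    exact Nat.sInf_mem hne

theorem IsPCRep.apply_castSucc_ne_apply_succ {u : ℝ → ℝ} {n : ℕ} {x : Fin (n + 2) → ℝ}
    {a : Fin (n + 1) → ℝ} (h : IsPCRep u x a) (hn : n ≤ jumps u) (i : Fin n) :
    a i.castSucc ≠ a i.succ := by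
  intro hi
  cases n with
  | zero => exact i.elim0
  | succ n => exact (h.comp_succAbove hi).jumps_le.not_gt hn

theorem IsPC.integrable {u : ℝ → ℝ} (hu : IsPC u) : Integrable u mu01 := by
  obtain ⟨m, x, a, -, -, -, h⟩ := hu
  have : IsFiniteMeasure mu01 := inferInstanceAs (IsFiniteMeasure (volume.restrict (Icc 0 1)))
  exact (integrable_stepF x a mu01).congr (EventuallyEq.symm h)

theorem abs_sub_mul_measureReal_le_L1dist {u v : ℝ → ℝ} (hu : Integrable u mu01)
    (hv : Integrable v mu01) {s : Set ℝ} (hs : s ⊆ Icc 0 1) {α β : ℝ}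
    (hα : u =ᵐ[volume.restrict s] fun _ => α) (hβ : v =ᵐ[volume.restrict s] fun _ => β) :
    |α - β| * volume.real s ≤ L1dist u v :=
  calc |α - β| * volume.real s = ∫ _ in s, |α - β| := by
        rw [setIntegral_const, smul_eq_mul, mul_comm]
    _ = ∫ t in s, |u t - v t| := integral_congr_ae <| by
        filter_upwards [hα, hβ] with t htα htβ
        rw [htα, htβ]
    _ ≤ L1dist u v :=
        setIntegral_mono_set (hu.sub hv).abs (ae_of_all _ fun _ => abs_nonneg _) hs.eventuallyLE

theorem min_mul_abs_sub_le_two_mul_L1dist {u v : ℝ → ℝ} (hu : Integrable u mu01)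
    (hv : Integrable v mu01) {p s q α β c : ℝ} (hp : 0 ≤ p) (hps : p ≤ s) (hsq : s ≤ q)
    (hq : q ≤ 1) (hα : u =ᵐ[volume.restrict (Ioo p s)] fun _ => α)
    (hβ : u =ᵐ[volume.restrict (Ioo s q)] fun _ => β)
    (hc : v =ᵐ[volume.restrict (Ioo p q)] fun _ => c) :
    min (s - p) (q - s) * |α - β| ≤ 2 * L1dist v u := by
  have hsub : ∀ {r t}, p ≤ r → t ≤ q → Ioo r t ⊆ Icc 0 1 := fun hr ht =>
    Ioo_subset_Icc_self.trans (Icc_subset_Icc (hp.trans hr) (ht.trans hq))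
  have hleft : |c - α| * (s - p) ≤ L1dist v u := by
    rw [← Real.volume_real_Ioo_of_le hps]
    exact abs_sub_mul_measureReal_le_L1dist hv hu (hsub le_rfl hsq)
      (ae_restrict_of_ae_restrict_of_subset (Ioo_subset_Ioo_right hsq) hc) hα
  have hright : |c - β| * (q - s) ≤ L1dist v u := by
    rw [← Real.volume_real_Ioo_of_le hsq]
    exact abs_sub_mul_measureReal_le_L1dist hv hu (hsub hps le_rfl)
      (ae_restrict_of_ae_restrict_of_subset (Ioo_subset_Ioo_left hps) hc) hβ
  have hδ : 0 ≤ min (s - p) (q - s) := le_min (sub_nonneg.2 hps) (sub_nonneg.2 hsq)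
  calc min (s - p) (q - s) * |α - β|
      ≤ min (s - p) (q - s) * (|c - α| + |c - β|) :=
        mul_le_mul_of_nonneg_left (abs_sub_comm c α ▸ abs_sub_le α c β) hδ
    _ = |c - α| * min (s - p) (q - s) + |c - β| * min (s - p) (q - s) := by ring
    _ ≤ |c - α| * (s - p) + |c - β| * (q - s) := by
        gcongr
        exacts [min_le_left _ _, min_le_right _ _]
    _ ≤ 2 * L1dist v u := by linarith

theorem exists_pos_forall_isPCRep_exists_mem_Ioo {u : ℝ → ℝ} (hu : Integrable u mu01)
    {p s q α β : ℝ} (hp : 0 ≤ p) (hps : p < s) (hsq : s < q) (hq : q ≤ 1)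
    (hα : u =ᵐ[volume.restrict (Ioo p s)] fun _ => α)
    (hβ : u =ᵐ[volume.restrict (Ioo s q)] fun _ => β) (hαβ : α ≠ β) :
    ∃ ε > 0, ∀ (v : ℝ → ℝ) (n : ℕ) (y : Fin (n + 2) → ℝ) (b : Fin (n + 1) → ℝ), IsPCRep v y b →
      L1dist v u < ε → ∃ j : Fin n, y j.castSucc.succ ∈ Ioo p q := by
  have hδ : 0 < min (s - p) (q - s) := lt_min (sub_pos.2 hps) (sub_pos.2 hsq)
  have hjump : 0 < |α - β| := abs_pos.2 (sub_ne_zero.2 hαβ)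
  refine ⟨min (s - p) (q - s) * |α - β| / 2, half_pos (mul_pos hδ hjump), ?_⟩
  intro v n y b hv hdist
  by_contra! hy
  obtain ⟨-, h0, h1, hb⟩ := isPCRep_iff_forall_openCell.1 hv
  obtain ⟨l, hl⟩ := exists_Ioo_subset_openCell ⟨s, hps, hsq⟩ (h0 ▸ hp) (h1 ▸ hq) hy
  have hbound := min_mul_abs_sub_le_two_mul_L1dist hu (IsPC.integrable ⟨_, y, b, hv⟩) hp hps.le
    hsq.le hq hα hβ (ae_restrict_of_ae_restrict_of_subset hl (hb l))
  linarith

theorem IsPCRep.exists_pos_forall_exists_mem_openCell_cellMidpoint {u : ℝ → ℝ} {n : ℕ}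
    {x : Fin (n + 2) → ℝ} {a : Fin (n + 1) → ℝ} (h : IsPCRep u x a) {i : Fin n}
    (hi : a i.castSucc ≠ a i.succ) :
    ∃ ε > 0, ∀ (v : ℝ → ℝ) (m : ℕ) (y : Fin (m + 2) → ℝ) (b : Fin (m + 1) → ℝ), IsPCRep v y b →
      L1dist v u < ε → ∃ j : Fin m, y j.castSucc.succ ∈ openCell (cellMidpoint x) i := by
  obtain ⟨hx, h0, h1, ha⟩ := isPCRep_iff_forall_openCell.1 h
  have hmid := cellMidpoint_mem_openCell hx
  have hmid01 : ∀ l, cellMidpoint x l ∈ Icc 0 1 := fun l => by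
    simpa only [h0, h1] using openCell_subset_Icc hx.monotone l (hmid l)
  exact exists_pos_forall_isPCRep_exists_mem_Ioo (IsPC.integrable ⟨_, x, a, h⟩)
    (hmid01 i.castSucc).1 (hmid i.castSucc).2 (hmid i.succ).1 (hmid01 i.succ).2
    (ae_restrict_of_ae_restrict_of_subset (Ioo_subset_Ioo_left (hmid i.castSucc).1.le)
      (ha i.castSucc))
    (ae_restrict_of_ae_restrict_of_subset (Ioo_subset_Ioo_right (hmid i.succ).2.le)
      (ha i.succ)) hi

theorem IsPC.exists_pos_forall_jumps_le {u : ℝ → ℝ} (hu : IsPC u) :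
    ∃ ε > 0, ∀ v, IsPC v → L1dist v u < ε → jumps u ≤ jumps v := by
  obtain ⟨x, a, h⟩ := hu.exists_isPCRep_jumps
  choose δ hδ hclose using fun i =>
    h.exists_pos_forall_exists_mem_openCell_cellMidpoint (h.apply_castSucc_ne_apply_succ le_rfl i)
  have hev : ∀ᶠ ε in nhdsWithin (0 : ℝ) (Ioi 0), ∀ i, ε < δ i := eventually_all.2 fun i =>
    eventually_nhdsWithin_of_eventually_nhds (eventually_lt_nhds (hδ i))
  obtain ⟨ε, hεδ, hε⟩ := (hev.and self_mem_nhdsWithin).exists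
  refine ⟨ε, hε, fun v hv hdist => ?_⟩
  obtain ⟨y, b, hvrep⟩ := hv.exists_isPCRep_jumps
  exact le_of_forall_exists_mem_openCell (monotone_cellMidpoint h.1.monotone) fun i =>
    hclose i v _ y b hvrep (hdist.trans (hεδ i))

theorem statement_5
    (u : ℝ → ℝ) (hu : IsPC u)
    (useq : ℕ → ℝ → ℝ) (huseq : ∀ k, IsPC (useq k))
    (hconv : Tendsto (fun k => L1dist (useq k) u) atTop (nhds 0)) :
    (∃ k0 : ℕ, ∀ k ≥ k0, jumps u ≤ jumps (useq k)) ∧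
    (jumps u : WithTop ℕ) ≤ liminf (fun k => (jumps (useq k) : WithTop ℕ)) atTop := by
  obtain ⟨ε, hε, hle⟩ := hu.exists_pos_forall_jumps_le
  have hev : ∀ᶠ k in atTop, jumps u ≤ jumps (useq k) :=
    (hconv.eventually_lt_const hε).mono fun k hk => hle _ (huseq k) hk
  exact ⟨eventually_atTop.1 hev,
    le_liminf_of_le (by isBoundedDefault) (hev.mono fun _ hk => WithTop.coe_le_coe.2 hk)⟩
end
end

section
/- For every C > 0 and every positive integer j, the set M_{C,j} = { Σ_{l=1}^j a_l·1_{(x_{l−1},x_l)} : 0 = x_0 ≤ x_1 ≤ ... ≤ x_j = 1, |a_l| ≤ C for all l } is a compact subset of L¹[0,1]. -/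
open MeasureTheory Filter Set
open scoped ENNReal

noncomputable section

/-!
A step function is determined by its nodes and its values. The admissible nodes and values form a
compact set, so it suffices that the step function depends continuously on them in `Lp`. This holds
because moving the endpoints of an interval changes it only within small neighbourhoods of the two
endpoints, and these have small measure when the measure is outer regular and has no atoms.
-/

open scoped Topology symmDiff

section Order

variable {α : Type*} [LinearOrder α]

lemma symmDiff_Ioo_subset (u v u' v' : α) :
    Ioo u v ∆ Ioo u' v' ⊆ uIcc u u' ∪ uIcc v v' := by
  intro t ht
  simp only [mem_symmDiff, mem_Ioo, mem_union, mem_uIcc] at *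
  grind

/-- The subdivisions `a = x₀ ≤ x₁ ≤ ⋯ ≤ xₙ = b`. Consecutive nodes may coincide, which is what
makes the set closed. -/
def subdivisions (a b : α) (n : ℕ) : Set (Fin (n + 1) → α) :=
  {x | Monotone x ∧ x 0 = a ∧ x (Fin.last n) = b}

lemma subdivisions_subset_Icc (a b : α) (n : ℕ) :
    subdivisions a b n ⊆ Icc (fun _ => a) (fun _ => b) := by
  rintro x ⟨hx, rfl, rfl⟩
  exact ⟨fun i => hx (Fin.zero_le i), fun i => hx (Fin.le_last i)⟩

variable [TopologicalSpace α] [OrderTopology α]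

lemma isClosed_subdivisions (a b : α) (n : ℕ) : IsClosed (subdivisions a b n) :=
  isClosed_monotone.inter <|
    (isClosed_eq (continuous_apply 0) continuous_const).inter <|
      isClosed_eq (continuous_apply (Fin.last n)) continuous_const

lemma isCompact_subdivisions [CompactIccSpace α] (a b : α) (n : ℕ) :
    IsCompact (subdivisions a b n) :=
  isCompact_Icc.of_isClosed_subset (isClosed_subdivisions a b n) (subdivisions_subset_Icc a b n)

end Order

section SmallSets

variable {α : Type*} [TopologicalSpace α] [MeasurableSpace α] {μ : Measure α}
  [μ.OuterRegular] [NullSingletonClass μ]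

lemma tendsto_measure_smallSets_nhds (a : α) : Tendsto μ (𝓝 a).smallSets (𝓝 0) := by
  refine ENNReal.tendsto_nhds_zero.2 fun ε hε => ?_
  obtain ⟨U, haU, hU, hμU⟩ := ({a} : Set α).exists_isOpen_lt_of_lt ε (μ := μ) (by simpa using hε)
  exact eventually_smallSets.2
    ⟨U, hU.mem_nhds (singleton_subset_iff.1 haU), fun s hs => (measure_mono hs).trans hμU.le⟩

lemma isLocallyFiniteMeasure_of_outerRegular : IsLocallyFiniteMeasure μ where
  finiteAtNhds a :=
    have ⟨s, hs, hμs⟩ := eventually_smallSets.1 <|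
      (tendsto_measure_smallSets_nhds (μ := μ) a).eventually_lt_const ENNReal.zero_lt_top
    ⟨s, hs, hμs s Subset.rfl⟩

variable [LinearOrder α] [OrderTopology α]

lemma tendsto_measure_uIcc_nhds (a : α) : Tendsto (fun b => μ (uIcc b a)) (𝓝 a) (𝓝 0) :=
  (tendsto_measure_smallSets_nhds a).comp (tendsto_id.uIcc tendsto_const_nhds)

lemma tendsto_measure_symmDiff_Ioo (u v : α) :
    Tendsto (fun q : α × α => μ (Ioo q.1 q.2 ∆ Ioo u v)) (𝓝 (u, v)) (𝓝 0) := by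
  have hu : Tendsto (fun q : α × α => μ (uIcc q.1 u)) (𝓝 (u, v)) (𝓝 0) :=
    (tendsto_measure_uIcc_nhds u).comp (continuous_fst.tendsto (u, v))
  have hv : Tendsto (fun q : α × α => μ (uIcc q.2 v)) (𝓝 (u, v)) (𝓝 0) :=
    (tendsto_measure_uIcc_nhds v).comp (continuous_snd.tendsto (u, v))
  refine tendsto_of_tendsto_of_tendsto_of_le_of_le tendsto_const_nhds
    (by simpa only [add_zero] using hu.add hv) (fun _ => zero_le) fun q => ?_
  exact (measure_mono (symmDiff_Ioo_subset q.1 q.2 u v)).trans (measure_union_le _ _)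

end SmallSets

section Indicator

variable {α ι E : Type*} [MeasurableSpace α] {μ : Measure α} [NormedAddCommGroup E]
  {p : ℝ≥0∞} [Fact (1 ≤ p)] {s : Set α} {hs : MeasurableSet s} {hμs : μ s ≠ ∞} {c : E}
  {l : Filter ι} {t : ι → Set α} {ht : ∀ i, MeasurableSet (t i)} {hμt : ∀ i, μ (t i) ≠ ∞}
  {d : ι → E}

lemma norm_indicatorConstLp_eq_mul_one (hp : p ≠ ∞) :
    ‖indicatorConstLp p hs hμs c‖ = ‖c‖ * ‖indicatorConstLp p hs hμs (1 : ℝ)‖ := by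
  have hp₀ : p ≠ 0 := (one_pos.trans_le Fact.out).ne'
  rw [norm_indicatorConstLp hp₀ hp, norm_indicatorConstLp hp₀ hp, norm_one, one_mul]

lemma tendsto_indicatorConstLp (hp : p ≠ ∞) (hts : Tendsto (fun i => μ (t i ∆ s)) l (𝓝 0))
    (hd : Tendsto d l (𝓝 c)) :
    Tendsto (fun i => indicatorConstLp p (ht i) (hμt i) (d i)) l
      (𝓝 (indicatorConstLp p hs hμs c)) := by
  have h_set : Tendsto (fun i => indicatorConstLp p (ht i) (hμt i) c) l
      (𝓝 (indicatorConstLp p hs hμs c)) := tendsto_indicatorConstLp_set hp hts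
  have h_value : Tendsto (fun i => indicatorConstLp p (ht i) (hμt i) (d i - c)) l (𝓝 0) := by
    have h_one : Tendsto (fun i => ‖indicatorConstLp p (ht i) (hμt i) (1 : ℝ)‖) l
        (𝓝 ‖indicatorConstLp p hs hμs (1 : ℝ)‖) := (tendsto_indicatorConstLp_set hp hts).norm
    rw [tendsto_zero_iff_norm_tendsto_zero]
    simp only [norm_indicatorConstLp_eq_mul_one hp (c := d _ - c)]
    simpa only [zero_mul] using (tendsto_iff_norm_sub_tendsto_zero.1 hd).mul h_one
  simpa only [indicatorConstLp_add, sub_add_cancel, zero_add] using h_value.add h_set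

end Indicator

section StepFunction

variable {α E : Type*} [LinearOrder α] [NormedAddCommGroup E] {n : ℕ}

/-- The step function with value `c l` on the open interval between the nodes `x l` and `x (l + 1)`.
It vanishes at the nodes; in `Lp` over an atomless measure the values there are irrelevant. -/
def stepFunction (x : Fin (n + 1) → α) (c : Fin n → E) : α → E :=
  fun t => ∑ l, (Ioo (x l.castSucc) (x l.succ)).indicator (fun _ => c l) t

variable [TopologicalSpace α] [OrderTopology α] [CompactIccSpace α] [MeasurableSpace α]
  [OpensMeasurableSpace α]

/-- The class in `Lp E p μ` of the function with value `c` on `(u, v)` and `0` elsewhere, a single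
summand of a step function. -/
def indicatorIooLp (p : ℝ≥0∞) (μ : Measure α) [IsLocallyFiniteMeasure μ] (u v : α) (c : E) :
    Lp E p μ :=
  indicatorConstLp p (measurableSet_Ioo (a := u) (b := v)) measure_Ioo_lt_top.ne c

/-- The class of `stepFunction x c` in `Lp E p μ`, as a sum of classes so that its continuity in
`x` and `c` can be checked on each piece. -/
def stepLp (p : ℝ≥0∞) (μ : Measure α) [IsLocallyFiniteMeasure μ]
    (x : Fin (n + 1) → α) (c : Fin n → E) : Lp E p μ :=
  ∑ l, indicatorIooLp p μ (x l.castSucc) (x l.succ) (c l)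

variable {p : ℝ≥0∞} {μ : Measure α}

section LocallyFinite

variable [IsLocallyFiniteMeasure μ]

lemma coeFn_stepLp (x : Fin (n + 1) → α) (c : Fin n → E) :
    stepLp p μ x c =ᵐ[μ] stepFunction x c := by
  have h_piece : ∀ᵐ t ∂μ, ∀ l, indicatorIooLp p μ (x l.castSucc) (x l.succ) (c l) t =
      (Ioo (x l.castSucc) (x l.succ)).indicator (fun _ => c l) t :=
    ae_all_iff.2 fun _ => indicatorConstLp_coeFn
  have h_sum := Lp.coeFn_finsetSum Finset.univ fun l =>
    indicatorIooLp p μ (x l.castSucc) (x l.succ) (c l)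
  filter_upwards [h_piece, h_sum] with t ht_piece ht_sum
  rw [stepLp, ht_sum, Finset.sum_apply]
  exact Finset.sum_congr rfl fun l _ => ht_piece l

lemma eq_stepLp_iff {F : Lp E p μ} {x : Fin (n + 1) → α} {c : Fin n → E} :
    F = stepLp p μ x c ↔ F =ᵐ[μ] stepFunction x c :=
  Lp.ext_iff.trans ⟨fun h => h.trans (coeFn_stepLp x c), fun h => h.trans (coeFn_stepLp x c).symm⟩

variable [Fact (1 ≤ p)] [μ.OuterRegular] [NullSingletonClass μ]

lemma continuous_indicatorIooLp (hp : p ≠ ∞) :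
    Continuous fun q : (α × α) × E => indicatorIooLp p μ q.1.1 q.1.2 q.2 :=
  continuous_iff_continuousAt.2 fun q => tendsto_indicatorConstLp hp
    ((tendsto_measure_symmDiff_Ioo q.1.1 q.1.2).comp (continuous_fst.tendsto q))
    (continuous_snd.tendsto q)

lemma continuous_stepLp (hp : p ≠ ∞) :
    Continuous fun q : (Fin (n + 1) → α) × (Fin n → E) => stepLp p μ q.1 q.2 :=
  continuous_finsetSum _ fun l _ => (continuous_indicatorIooLp hp).comp
    (f := fun q : (Fin (n + 1) → α) × (Fin n → E) => ((q.1 l.castSucc, q.1 l.succ), q.2 l))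
    (by fun_prop)

end LocallyFinite

theorem statement_6_general [Fact (1 ≤ p)] [μ.OuterRegular] [NullSingletonClass μ] (hp : p ≠ ∞)
    (a b : α) {K : Set E} (hK : IsCompact K) (n : ℕ) :
    IsCompact {F : Lp E p μ | ∃ (x : Fin (n + 1) → α) (c : Fin n → E),
      Monotone x ∧ x 0 = a ∧ x (Fin.last n) = b ∧ (∀ l, c l ∈ K) ∧
        F =ᵐ[μ] stepFunction x c} := by
  have : IsLocallyFiniteMeasure μ := isLocallyFiniteMeasure_of_outerRegular
  have h_params : IsCompact (subdivisions a b n ×ˢ univ.pi fun _ : Fin n => K) :=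
    (isCompact_subdivisions a b n).prod (isCompact_univ_pi fun _ => hK)
  convert h_params.image (continuous_stepLp (μ := μ) hp) using 1
  ext F
  simp [subdivisions, ← eq_stepLp_iff, and_assoc, eq_comm]

end StepFunction

instance : IsFiniteMeasure mu01 := inferInstanceAs (IsFiniteMeasure (volume.restrict _))

instance : NullSingletonClass mu01 := inferInstanceAs (NullSingletonClass (volume.restrict _))

/-- The set `M_{C,j}` of (classes of) step functions with at most `j` pieces, all of whose
values are bounded by `C` in absolute value, is a compact subset of `L¹[0,1]`. -/
theorem statement_6 (C : ℝ) (hC : 0 < C) (j : ℕ) (hj : 1 ≤ j) :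
    IsCompact {F : Lp ℝ 1 mu01 |
      ∃ (x : Fin (j + 1) → ℝ) (a : Fin j → ℝ),
        Monotone x ∧ x 0 = 0 ∧ x (Fin.last j) = 1 ∧ (∀ l, |a l| ≤ C) ∧
        ∀ᵐ t ∂mu01,
          F t = ∑ l : Fin j,
            Set.indicator (Set.Ioo (x l.castSucc) (x l.succ)) (fun _ => a l) t} := by
  simpa only [mem_closedBall_zero_iff, Real.norm_eq_abs, EventuallyEq, stepFunction] using
    statement_6_general (μ := mu01) ENNReal.one_ne_top 0 1 (isCompact_closedBall (0 : ℝ) C) j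
end
end

section
/- Let n ≥ 1, f ∈ ℝ^n, γ > 0, and let w_1,...,w_n > 0 be weights. Then the discrete weighted L¹-Potts functional u ↦ γ·#{i ∈ {1,...,n−1} : u_i ≠ u_{i+1}} + Σ_{i=1}^n w_i·|u_i − f_i| attains its minimum over u ∈ ℝ^n, i.e., there exists u* ∈ ℝ^n with γ·J(u*) + ‖u* − f‖_{ℓ¹_w} ≤ γ·J(u) + ‖u − f‖_{ℓ¹_w} for all u ∈ ℝ^n. -/
open scoped Classical

noncomputable section

/-- Number of jumps of a discrete signal `u ∈ ℝ^{n+1}`. -/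
def discJumps {n : ℕ} (u : Fin (n + 1) → ℝ) : ℕ :=
  (Finset.univ.filter fun i : Fin n => u i.castSucc ≠ u i.succ).card

/-- Weighted `ℓ¹` distance. -/
def wdist {n : ℕ} (w u f : Fin (n + 1) → ℝ) : ℝ := ∑ i, w i * |u i - f i|

/-!
Replace each value `c` taken by a competitor `v` by a weighted median of the data over the level set
`{i | v i = c}`. Indices with equal values keep equal values, so no jump is created, and the
weighted distance does not increase on any level set. A weighted median can be chosen among the data
values, because the weighted sum of distances to finitely many points of a line is affine between
consecutive points. Hence only the finitely many signals with values in the range of `f` compete.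
-/

theorem concaveOn_finset_sum {𝕜 E β ι : Type*} [Semiring 𝕜] [PartialOrder 𝕜]
    [AddCommMonoid E] [SMul 𝕜 E] [AddCommMonoid β] [PartialOrder β] [IsOrderedAddMonoid β]
    [Module 𝕜 β] {t : Set E} (ht : Convex 𝕜 t) {s : Finset ι} {g : ι → E → β}
    (hg : ∀ i ∈ s, ConcaveOn 𝕜 t (g i)) : ConcaveOn 𝕜 t fun x => ∑ i ∈ s, g i x := by
  rw [← Finset.sum_fn]
  exact Finset.sum_induction g (ConcaveOn 𝕜 t) (fun _ _ => ConcaveOn.add)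
    (concaveOn_const 0 ht) hg

section AbsSub

variable {𝕜 ι : Type*} [CommRing 𝕜] [LinearOrder 𝕜] [IsStrictOrderedRing 𝕜]

theorem concaveOn_abs_sub_of_notMem_Ioo {a b y : 𝕜} (hy : y ∉ Set.Ioo a b) :
    ConcaveOn 𝕜 (Set.Icc a b) fun x => |x - y| := by
  rcases le_or_gt y a with hya | hay
  · refine ((concaveOn_id (convex_Icc a b)).sub (convexOn_const y (convex_Icc a b))).congr ?_
    exact fun x hx => (abs_of_nonneg (sub_nonneg.2 (hya.trans hx.1))).symm
  · have hby : b ≤ y := not_lt.1 fun hyb => hy ⟨hay, hyb⟩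
    refine ((concaveOn_const y (convex_Icc a b)).sub (convexOn_id (convex_Icc a b))).congr ?_
    exact fun x hx => (abs_of_nonneg (sub_nonneg.2 (hx.2.trans hby))).symm.trans (abs_sub_comm _ _)

theorem concaveOn_sum_mul_abs_sub {s : Finset ι} {w f : ι → 𝕜} (hw : ∀ i ∈ s, 0 ≤ w i) {a b : 𝕜}
    (hf : ∀ i ∈ s, f i ∉ Set.Ioo a b) :
    ConcaveOn 𝕜 (Set.Icc a b) fun x => ∑ i ∈ s, w i * |x - f i| :=
  concaveOn_finset_sum (convex_Icc a b) fun i hi =>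
    (concaveOn_abs_sub_of_notMem_Ioo (hf i hi)).smul (hw i hi)

end AbsSub

theorem exists_sum_mul_abs_sub_le {𝕜 ι : Type*} [Field 𝕜] [LinearOrder 𝕜] [IsStrictOrderedRing 𝕜]
    {s : Finset ι} (hs : s.Nonempty) {w f : ι → 𝕜} (hw : ∀ i ∈ s, 0 ≤ w i) (c : 𝕜) :
    ∃ j ∈ s, ∑ i ∈ s, w i * |f j - f i| ≤ ∑ i ∈ s, w i * |c - f i| := by
  rcases (s.filter (f · ≤ c)).eq_empty_or_nonempty with hL | hL
  · obtain ⟨j, hj, hmin⟩ := s.exists_min_image f hs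
    refine ⟨j, hj, Finset.sum_le_sum fun i hi => mul_le_mul_of_nonneg_left ?_ (hw i hi)⟩
    have hcj : c < f j := not_le.1 (Finset.filter_eq_empty_iff.1 hL hj)
    rw [abs_sub_comm (f j), abs_sub_comm c]
    exact abs_le_abs_of_nonneg (sub_nonneg.2 (hmin i hi)) (sub_le_sub_left hcj.le _)
  rcases (s.filter (c ≤ f ·)).eq_empty_or_nonempty with hR | hR
  · obtain ⟨j, hj, hmax⟩ := s.exists_max_image f hs
    refine ⟨j, hj, Finset.sum_le_sum fun i hi => mul_le_mul_of_nonneg_left ?_ (hw i hi)⟩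
    have hjc : f j < c := not_le.1 (Finset.filter_eq_empty_iff.1 hR hj)
    exact abs_le_abs_of_nonneg (sub_nonneg.2 (hmax i hi)) (sub_le_sub_right hjc.le _)
  obtain ⟨l, hl, hlmax⟩ := Finset.exists_max_image _ f hL
  obtain ⟨r, hr, hrmin⟩ := Finset.exists_min_image _ f hR
  rw [Finset.mem_filter] at hl hr
  have hgap : ∀ i ∈ s, f i ∉ Set.Ioo (f l) (f r) := by
    rintro i hi ⟨hli, hir⟩
    rcases le_total (f i) c with hic | hci
    · exact hli.not_ge (hlmax i (Finset.mem_filter.2 ⟨hi, hic⟩))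
    · exact hir.not_ge (hrmin i (Finset.mem_filter.2 ⟨hi, hci⟩))
  have hlr : f l ≤ f r := hl.2.trans hr.2
  rcases min_le_iff.1 ((concaveOn_sum_mul_abs_sub hw hgap).min_le_of_mem_Icc
    (Set.left_mem_Icc.2 hlr) (Set.right_mem_Icc.2 hlr) ⟨hl.2, hr.2⟩) with h | h
  exacts [⟨l, hl.1, h⟩, ⟨r, hr.1, h⟩]

section Signals

variable {n : ℕ}

theorem discJumps_comp_le (φ : ℝ → ℝ) (v : Fin (n + 1) → ℝ) :
    discJumps (φ ∘ v) ≤ discJumps v :=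
  Finset.card_le_card <| Finset.monotone_filter_right _ fun _ _ => ne_of_apply_ne φ

theorem wdist_eq_sum_fiberwise (w u f v : Fin (n + 1) → ℝ) :
    wdist w u f = ∑ c ∈ Finset.univ.image v, ∑ i with v i = c, w i * |u i - f i| :=
  (Finset.sum_fiberwise_of_maps_to (fun _ => Finset.mem_image_of_mem v) _).symm

theorem wdist_comp_le {w f v : Fin (n + 1) → ℝ} {φ : ℝ → ℝ}
    (hφ : ∀ c, ∑ i with v i = c, w i * |φ c - f i| ≤ ∑ i with v i = c, w i * |c - f i|) :
    wdist w (φ ∘ v) f ≤ wdist w v f := by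
  have fiber_sum (ψ : ℝ → ℝ) (c : ℝ) :
      ∑ i with v i = c, w i * |ψ (v i) - f i| = ∑ i with v i = c, w i * |ψ c - f i| :=
    Finset.sum_congr rfl fun i hi => by rw [(Finset.mem_filter.1 hi).2]
  rw [wdist_eq_sum_fiberwise w (φ ∘ v) f v, wdist_eq_sum_fiberwise w v f v]
  exact Finset.sum_le_sum fun c _ =>
    (fiber_sum φ c).trans_le ((hφ c).trans_eq (fiber_sum id c).symm)

theorem exists_discJumps_comp_le_and_wdist_comp_le {w : Fin (n + 1) → ℝ} (hw : ∀ i, 0 ≤ w i)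
    (f v : Fin (n + 1) → ℝ) :
    ∃ σ : Fin (n + 1) → Fin (n + 1),
      discJumps (f ∘ σ) ≤ discJumps v ∧ wdist w (f ∘ σ) f ≤ wdist w v f := by
  have exists_median (c : ℝ) : ∃ j,
      ∑ i with v i = c, w i * |f j - f i| ≤ ∑ i with v i = c, w i * |c - f i| := by
    rcases (Finset.univ.filter (v · = c)).eq_empty_or_nonempty with hc | hc
    · exact ⟨0, by simp only [hc, Finset.sum_empty, le_refl]⟩
    · obtain ⟨j, -, hj⟩ := exists_sum_mul_abs_sub_le hc (fun i _ => hw i) c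
      exact ⟨j, hj⟩
  choose m hm using exists_median
  exact ⟨m ∘ v, discJumps_comp_le (f ∘ m) v, wdist_comp_le (φ := f ∘ m) hm⟩

end Signals

theorem statement_12_general (n : ℕ) (f w : Fin (n + 1) → ℝ) (hw : ∀ i, 0 ≤ w i)
    (γ : ℝ) (hγ : 0 ≤ γ) :
    ∃ σ : Fin (n + 1) → Fin (n + 1), ∀ v : Fin (n + 1) → ℝ,
      γ * (discJumps (f ∘ σ) : ℝ) + wdist w (f ∘ σ) f ≤ γ * (discJumps v : ℝ) + wdist w v f := by
  obtain ⟨σ, hσ⟩ := Finite.exists_min fun τ : Fin (n + 1) → Fin (n + 1) =>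
    γ * (discJumps (f ∘ τ) : ℝ) + wdist w (f ∘ τ) f
  refine ⟨σ, fun v => ?_⟩
  obtain ⟨τ, hjumps, hdist⟩ := exists_discJumps_comp_le_and_wdist_comp_le hw f v
  calc
    γ * (discJumps (f ∘ σ) : ℝ) + wdist w (f ∘ σ) f
        ≤ γ * (discJumps (f ∘ τ) : ℝ) + wdist w (f ∘ τ) f := hσ τ
    _ ≤ γ * (discJumps v : ℝ) + wdist w v f := by gcongr

/-- The discrete weighted `L¹`-Potts functional attains its minimum over `ℝ^{n+1}`. -/
theorem statement_12 (n : ℕ) (f w : Fin (n + 1) → ℝ) (hw : ∀ i, 0 < w i)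
    (γ : ℝ) (hγ : 0 < γ) :
    ∃ u : Fin (n + 1) → ℝ, ∀ v : Fin (n + 1) → ℝ,
      γ * (discJumps u : ℝ) + wdist w u f ≤ γ * (discJumps v : ℝ) + wdist w v f := by
  obtain ⟨σ, hσ⟩ := statement_12_general n f w (fun i => (hw i).le) γ hγ.le
  exact ⟨f ∘ σ, hσ⟩
end
end
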